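/- Let n ≥ 1, d ∈ ℝ^n with d > 0 entrywise, y ∈ ℝ^n, and σ ∈ S_n. Then th_{d,y}(∑_{i=1}^{j} d_{σ(i)}) = ∑_{i=1}^{j} y_{σ(i)} holds for all j = 1,…,n−1 if and only if y_{σ(1)}/d_{σ(1)} ≥ y_{σ(2)}/d_{σ(2)} ≥ … ≥ y_{σ(n)}/d_{σ(n)}. -/

import Mathlib

open Finset

noncomputable def th {n : ℕ} (d y : Fin n → ℝ) (c : ℝ) : ℝ :=
  sInf ((fun i => (∑ j, max (y j - y i / d i * d j) 0) + y i / d i * c) ''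
    {i : Fin n | 0 < d i})

noncomputable def psum {n : ℕ} (d : Fin n → ℝ) (σ : Equiv.Perm (Fin n)) (j : ℕ) : ℝ :=
  ∑ i ∈ Finset.univ.filter (fun i : Fin n => (i : ℕ) < j), d (σ i)

noncomputable def Emap {n : ℕ} (d y : Fin n → ℝ) (σ : Equiv.Perm (Fin n)) : Fin n → ℝ :=
  fun k => th d y (psum d σ ((σ.symm k : ℕ) + 1)) - th d y (psum d σ (σ.symm k : ℕ))

def dStoch {n : ℕ} (d : Fin n → ℝ) (A : Matrix (Fin n) (Fin n) ℝ) : Prop :=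
  (∀ i j, 0 ≤ A i j) ∧ (∀ j, ∑ i, A i j = 1) ∧ A.mulVec d = d

def Mset {n : ℕ} (d y : Fin n → ℝ) : Set (Fin n → ℝ) :=
  {x | ∃ A : Matrix (Fin n) (Fin n) ℝ, dStoch d A ∧ A.mulVec y = x}

noncomputable def Aentry {n : ℕ} (d : Fin n → ℝ) (σ τ : Equiv.Perm (Fin n))
    (α : ℕ → Fin n) (j k : Fin n) : ℝ :=
  if k = α j.val ∧ (α j.val).val < (α (j.val + 1)).val then
    (psum d τ ((α j.val).val + 1) - psum d σ j.val) / d (τ (α j.val))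
  else if (α j.val).val < k.val ∧ k.val < (α (j.val + 1)).val then 1
  else if (α j.val).val < (α (j.val + 1)).val ∧ k = α (j.val + 1) then
    (psum d σ (j.val + 1) - psum d τ (α (j.val + 1)).val) / d (τ (α (j.val + 1)))
  else if α j.val = α (j.val + 1) ∧ k = α (j.val + 1) then
    d (σ j) / d (τ (α (j.val + 1)))
  else 0

noncomputable def Amat {n : ℕ} (d : Fin n → ℝ) (σ τ : Equiv.Perm (Fin n))
    (α : ℕ → Fin n) : Matrix (Fin n) (Fin n) ℝ :=
  Matrix.of fun p q => Aentry d σ τ α (σ.symm p) (τ.symm q)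

/-!
Abbreviate by `L_l` the affine function `c ↦ ∑ j, max (y j - l * d j) 0 + l * c`, so that `th d y`
is the minimum of the `L_l` over the ratios `l = y i / d i`. For a finite set `s` of indices,
`L_l (∑ i ∈ s, d i)` exceeds `∑ i ∈ s, y i` by a sum of nonnegative terms, all of which vanish
exactly when `l` separates the ratios inside `s` from those outside. Hence
`th d y (∑ i ∈ s, d i) = ∑ i ∈ s, y i` says that every ratio inside `s` is at least every ratio
outside `s`; for the initial segments of an ordering of the indices, this is sortedness.
-/

section PositivePart

variable {ι M : Type*} [Fintype ι] [AddCommMonoid M] [LinearOrder M]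

theorem sum_le_sum_max_zero [IsOrderedAddMonoid M] (s : Finset ι) (z : ι → M) :
    ∑ i ∈ s, z i ≤ ∑ i, max (z i) 0 :=
  calc ∑ i ∈ s, z i
    _ ≤ ∑ i ∈ s, max (z i) 0 := sum_le_sum fun _ _ => le_max_left _ _
    _ ≤ ∑ i, max (z i) 0 := sum_le_univ_sum_of_nonneg fun _ => le_max_right _ _

theorem sum_eq_sum_max_zero_iff [IsOrderedCancelAddMonoid M] (s : Finset ι) (z : ι → M) :
    ∑ i ∈ s, z i = ∑ i, max (z i) 0 ↔ (∀ i ∈ s, 0 ≤ z i) ∧ ∀ i ∉ s, z i ≤ 0 := by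
  classical
  have term_le (i : ι) : (if i ∈ s then z i else 0) ≤ max (z i) 0 := by
    split_ifs <;> simp
  have term_eq_iff (i : ι) : (if i ∈ s then z i else 0) = max (z i) 0 ↔
      (i ∈ s → 0 ≤ z i) ∧ (i ∉ s → z i ≤ 0) := by
    split_ifs with hi <;> simp [hi]
  rw [← Fintype.sum_ite_mem, sum_eq_sum_iff_of_le fun i _ => term_le i]
  simp only [mem_univ, forall_const, term_eq_iff, forall_and]

end PositivePart

section Order

variable {α : Type*}

theorem isLeast_eq_iff_mem_of_mem_lowerBounds [PartialOrder α] {S : Set α} {m b : α}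
    (hm : IsLeast S m) (hb : b ∈ lowerBounds S) : m = b ↔ b ∈ S :=
  ⟨fun h => h ▸ hm.1, fun h => hm.unique ⟨h, hb⟩⟩

theorem exists_separating_index_iff {ι : Type*} [Finite ι] [Nonempty ι] [LinearOrder α]
    (s : Finset ι) (f : ι → α) :
    (∃ i, (∀ a ∈ s, f i ≤ f a) ∧ ∀ b ∉ s, f b ≤ f i) ↔ ∀ a ∈ s, ∀ b ∉ s, f b ≤ f a := by
  constructor
  · rintro ⟨i, h_mem, h_notMem⟩ a ha b hb
    exact (h_notMem b hb).trans (h_mem a ha)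
  · intro h
    rcases s.eq_empty_or_nonempty with rfl | hs
    · obtain ⟨i, hi⟩ := Finite.exists_max f
      exact ⟨i, by simp, fun b _ => hi b⟩
    · obtain ⟨i, his, hi⟩ := s.exists_min_image f hs
      exact ⟨i, hi, h i his⟩

theorem antitone_fin_iff_forall_cut [Preorder α] {n : ℕ} {f : Fin n → α} :
    Antitone f ↔ ∀ j : ℕ, 1 ≤ j → j ≤ n - 1 → ∀ a : Fin n, a < j → ∀ b : Fin n, j ≤ b →
      f b ≤ f a := by
  refine ⟨fun h j _ _ a ha b hb => h (Fin.le_def.2 (ha.le.trans hb)), fun h => ?_⟩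
  refine antitone_iff_forall_lt.2 fun a b hab => ?_
  have hab : (a : ℕ) < b := hab
  exact h b (by omega) (by omega) a hab b le_rfl

end Order

section ThermoLine

variable {ι : Type*} [Fintype ι]

/-- The affine function of slope `l` occurring in the definition of the thermomajorization curve:
`th d y` is the minimum of `thermoLine d y l` over the slopes `l = y i / d i` with `0 < d i`. -/
def thermoLine (d y : ι → ℝ) (l c : ℝ) : ℝ :=
  (∑ j, max (y j - l * d j) 0) + l * c

theorem sum_le_thermoLine_sum (d y : ι → ℝ) (l : ℝ) (s : Finset ι) :
    ∑ i ∈ s, y i ≤ thermoLine d y l (∑ i ∈ s, d i) := by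
  have h := sum_le_sum_max_zero s fun i => y i - l * d i
  rwa [sum_sub_distrib, ← mul_sum, sub_le_iff_le_add] at h

theorem thermoLine_sum_eq_sum_iff (d y : ι → ℝ) (l : ℝ) (s : Finset ι) :
    thermoLine d y l (∑ i ∈ s, d i) = ∑ i ∈ s, y i ↔
      (∀ i ∈ s, l * d i ≤ y i) ∧ ∀ i ∉ s, y i ≤ l * d i := by
  have h := sum_eq_sum_max_zero_iff s fun i => y i - l * d i
  simp only [sub_nonneg, sub_nonpos] at h
  rw [← h, sum_sub_distrib, ← mul_sum, sub_eq_iff_eq_add, eq_comm, thermoLine]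

end ThermoLine

section ThermoCurve

variable {n : ℕ} {d : Fin n → ℝ}

theorem isLeast_th (hd : ∃ i, 0 < d i) (y : Fin n → ℝ) (c : ℝ) :
    IsLeast ((fun i => thermoLine d y (y i / d i) c) '' {i | 0 < d i}) (th d y c) :=
  have hfin := Set.toFinite ((fun i => thermoLine d y (y i / d i) c) '' {i | 0 < d i})
  ⟨Set.Nonempty.csInf_mem (Set.Nonempty.image _ hd) hfin, fun _ => csInf_le hfin.bddBelow⟩

theorem th_sum_eq_sum_iff_exists (hd : ∃ i, 0 < d i) (y : Fin n → ℝ) (s : Finset (Fin n)) :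
    th d y (∑ i ∈ s, d i) = ∑ i ∈ s, y i ↔
      ∃ i, 0 < d i ∧ (∀ k ∈ s, y i / d i * d k ≤ y k) ∧ ∀ k ∉ s, y k ≤ y i / d i * d k := by
  rw [isLeast_eq_iff_mem_of_mem_lowerBounds (isLeast_th hd y _)]
  · simp only [Set.mem_image, Set.mem_ofPred_eq, thermoLine_sum_eq_sum_iff]
  · rintro _ ⟨i, -, rfl⟩
    exact sum_le_thermoLine_sum d y _ s

theorem th_sum_eq_sum_iff [NeZero n] (hd : ∀ i, 0 < d i) (y : Fin n → ℝ) (s : Finset (Fin n)) :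
    th d y (∑ i ∈ s, d i) = ∑ i ∈ s, y i ↔ ∀ a ∈ s, ∀ b ∉ s, y b / d b ≤ y a / d a := by
  rw [th_sum_eq_sum_iff_exists ⟨0, hd 0⟩, ← exists_separating_index_iff s fun i => y i / d i]
  simp only [hd, true_and, ← le_div_iff₀ (hd _), ← div_le_iff₀ (hd _)]

theorem th_comp_perm (d y : Fin n → ℝ) (σ : Equiv.Perm (Fin n)) (c : ℝ) :
    th (d ∘ σ) (y ∘ σ) c = th d y c := by
  have sum_comp (l : ℝ) :
      ∑ j, max (y (σ j) - l * d (σ j)) 0 = ∑ j, max (y j - l * d j) 0 :=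
    Equiv.sum_comp σ fun j => max (y j - l * d j) 0
  simp only [th, Function.comp_apply, sum_comp]
  rw [← Set.image_preimage_eq {i | 0 < d i} σ.surjective, Set.image_image, Set.preimage_ofPred_eq]

end ThermoCurve

/-- th_{d,y}(∑_{i≤j} d_{σ(i)}) = ∑_{i≤j} y_{σ(i)} for all j iff σ sorts y/d
non-increasingly. -/
theorem stmt17 (n : ℕ) (hn : 1 ≤ n) (d y : Fin n → ℝ) (hd : ∀ i, 0 < d i)
    (σ : Equiv.Perm (Fin n)) :
    (∀ j : ℕ, 1 ≤ j → j ≤ n - 1 →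
        th d y (psum d σ j) =
          ∑ i ∈ Finset.univ.filter (fun i : Fin n => (i : ℕ) < j), y (σ i)) ↔
      Antitone (fun j : Fin n => y (σ j) / d (σ j)) := by
  have : NeZero n := ⟨by omega⟩
  have eq_iff_cut (j : ℕ) :
      th d y (psum d σ j) = ∑ i ∈ univ.filter (fun i : Fin n => (i : ℕ) < j), y (σ i) ↔
        ∀ a : Fin n, a < j → ∀ b : Fin n, j ≤ b → y (σ b) / d (σ b) ≤ y (σ a) / d (σ a) := by
    rw [← th_comp_perm d y σ]
    simpa only [psum, Function.comp_apply, mem_filter, mem_univ, true_and, not_lt] using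
      th_sum_eq_sum_iff (d := d ∘ σ) (fun i => hd (σ i)) (y ∘ σ) {i | i < j}
  simp only [antitone_fin_iff_forall_cut, eq_iff_cut]
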